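/- In the box problem with boxes considered in the fixed order 1, 2, …, m, let X be a half-infinite interval of the form (θ,∞) or [θ,∞), and consider the κ-thresholding policy with target interval X: going through boxes in order, it skips every box with z_i ∉ X, opens every box with z_i ∈ X (paying cost c_i), and stops and claims the prize of the first opened box whose prize v_i lies in X. Then the expected net value of this policy equals E[κ_τ · 1{τ ≤ m}], where τ = min{ i : κ_i ∈ X } is the first index whose covered call value lies in X (and the expectation is 0 on the event that no such index exists). -/

import Mathlib

/-!
Write `κ = min v z`. When `κ` lies in the upper set `X`, the prize is `v = κ + (v - z)⁺`; when only
`z` lies in `X`, we have `v < z` and `(v - z)⁺ = 0`. So opening a box with `z ∈ X` nets `κ` or `0`,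
according as the policy stops there or not, plus the surplus `(v - z)⁺ - c`. The surplus has mean
zero by the choice of `z`, and whether the box is reached depends only on the earlier boxes, which
are independent of it. Hence the total surplus collected has mean zero.
-/

open MeasureTheory ProbabilityTheory

/-- The value obtained by a threshold stopping rule with eligible set `X ⊆ ℝ` applied to
the finite sequence `x 0, x 1, …, x (m-1)`: it selects the first entry lying in `X`,
and receives `0` if no entry lies in `X`. -/
noncomputable def thresholdStopValue {m : ℕ} (x : Fin m → ℝ) (X : Set ℝ) : ℝ := by
  classical
  exact match Fin.find? (fun i => x i ∈ X) with
    | some i => x i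
    | none => 0

open Classical in
/-- The (realized) net value of the `κ`-thresholding policy with target interval `X` in
the box problem with exogenous order `1,…,m`: going through boxes in order it skips
every box with `z i ∉ X`, opens every box with `z i ∈ X` (paying `c i`), and stops and
claims the prize of the first opened box whose prize `v i` lies in `X`.  Since `X` is
a half-infinite interval, the policy stops exactly at the first `i` with
`κ i = min (v i) (z i) ∈ X`, having opened all boxes `j ≤ i` with `z j ∈ X`. -/
noncomputable def kappaThreshNet {m : ℕ} (v z c : Fin m → ℝ) (X : Set ℝ) : ℝ :=
  match Fin.find? (fun i => min (v i) (z i) ∈ X) with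
  | some i => v i - ∑ j ∈ Finset.univ.filter (fun j : Fin m => z j ∈ X ∧ j ≤ i), c j
  | none => - ∑ j ∈ Finset.univ.filter (fun j : Fin m => z j ∈ X), c j

section Reaches

variable {ι α : Type*} {x : ι → α} {X : Set α} {i j : ι}

/-- The rule that goes through the sequence `x` in order and stops at its first entry in `X` gets to
look at the entry `j`, possibly stopping there. -/
def Reaches [LT ι] (x : ι → α) (X : Set α) (j : ι) : Prop :=
  ∀ i < j, x i ∉ X

lemma reaches_of_forall_notMem [LT ι] (h : ∀ i, x i ∉ X) : Reaches x X j :=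
  fun i _ => h i

lemma Reaches.le_of_mem [LinearOrder ι] (hj : Reaches x X j) (hi : x i ∈ X) : j ≤ i :=
  not_lt.1 fun hij => hj i hij hi

lemma Reaches.iff_le_of_mem [LinearOrder ι] (hi : Reaches x X i) (hxi : x i ∈ X) :
    Reaches x X j ↔ j ≤ i :=
  ⟨fun hj => hj.le_of_mem hxi, fun hji k hkj => hi k (hkj.trans_le hji)⟩

open Classical in
lemma Reaches.sum_indicator_eq_of_mem [LinearOrder ι] [Fintype ι] {M : Type*} [AddCommMonoid M]
    (hi : Reaches x X i) (hxi : x i ∈ X) (f : ι → M) :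
    ∑ j with Reaches x X j, X.indicator (fun _ => f j) (x j) = f i := by
  rw [Finset.sum_eq_single_of_mem i (by simpa using hi), Set.indicator_of_mem hxi]
  intro j hj hji
  refine Set.indicator_of_notMem (fun hxj => hji ?_) _
  exact le_antisymm ((Finset.mem_filter_univ j).1 hj |>.le_of_mem hxi) (hi.le_of_mem hxj)

open Classical in
lemma sum_filter_reaches_eq_sum_indicator [LT ι] {Ω M : Type*} [AddCommMonoid M] (s : Finset ι)
    (x : ι → Ω → α) (X : Set α) (g : ι → Ω → M) :
    (fun ω => ∑ j ∈ s with Reaches (fun i => x i ω) X j, g j ω)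
      = fun ω => ∑ j ∈ s, {ω | Reaches (fun i => x i ω) X j}.indicator (g j) ω := by
  simp only [Finset.sum_filter, Set.indicator_apply, Set.mem_ofPred_eq]

end Reaches

section Pathwise

variable {m : ℕ}

open Classical in
lemma thresholdStopValue_eq_sum (x : Fin m → ℝ) (X : Set ℝ) :
    thresholdStopValue x X = ∑ j with Reaches x X j, X.indicator id (x j) := by
  unfold thresholdStopValue
  rcases h : Fin.find? (fun i => decide (x i ∈ X)) with _ | i
  · simp only [Fin.find?_eq_none_iff, decide_eq_false_iff_not] at h
    simp [h]
  · simp only [Fin.find?_eq_some_iff, decide_eq_true_eq, decide_eq_false_iff_not] at h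
    exact (Reaches.sum_indicator_eq_of_mem h.2 h.1 x).symm

open Classical in
lemma kappaThreshNet_eq_sum (v z c : Fin m → ℝ) (X : Set ℝ) :
    kappaThreshNet v z c X = ∑ j with Reaches (fun i => min (v i) (z i)) X j,
      (X.indicator (fun _ => v j) (min (v j) (z j)) - X.indicator (fun _ => c j) (z j)) := by
  rw [Finset.sum_sub_distrib]
  unfold kappaThreshNet
  rcases h : Fin.find? (fun i => decide (min (v i) (z i) ∈ X)) with _ | i
  · simp only [Fin.find?_eq_none_iff, decide_eq_false_iff_not] at h
    simp [h, reaches_of_forall_notMem, Finset.sum_filter, Set.indicator_apply]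
  · simp only [Fin.find?_eq_some_iff, decide_eq_true_eq, decide_eq_false_iff_not] at h
    have hi : Reaches (fun i => min (v i) (z i)) X i := h.2
    rw [hi.sum_indicator_eq_of_mem h.1 v]
    simp only [hi.iff_le_of_mem h.1, Finset.sum_filter, Set.indicator_apply, ← ite_and, and_comm]

lemma indicator_min_eq_add_indicator_max_sub {G : Type*} [AddCommGroup G] [LinearOrder G]
    [IsOrderedAddMonoid G] {X : Set G} (hX : IsUpperSet X) (v z : G) :
    X.indicator (fun _ => v) (min v z)
      = X.indicator id (min v z) + X.indicator (fun t => max (v - t) 0) z := by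
  by_cases hz : z ∈ X
  · rcases le_total v z with hvz | hzv
    · simp [hz, hvz, Set.indicator]
    · simp [hz, hzv]
  · have hκ : min v z ∉ X := fun h => hz (hX (min_le_right v z) h)
    simp [hz, hκ]

/-- The surplus `(v - z)⁺ - c` of opening a box over receiving its covered call value; it is set to
`0` for `z ∉ X`, when the policy skips the box. -/
noncomputable def boxSurplus (X : Set ℝ) (z c v : ℝ) : ℝ :=
  X.indicator (fun t => max (v - t) 0 - c) z

lemma boxSurplus_of_mem {X : Set ℝ} {z : ℝ} (hz : z ∈ X) (c : ℝ) :
    boxSurplus X z c = fun v => max (v - z) 0 - c :=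
  funext fun _ => Set.indicator_of_mem hz _

lemma boxSurplus_of_notMem {X : Set ℝ} {z : ℝ} (hz : z ∉ X) (c : ℝ) :
    boxSurplus X z c = fun _ => 0 :=
  funext fun _ => Set.indicator_of_notMem hz _

open Classical in
lemma kappaThreshNet_eq_thresholdStopValue_add {X : Set ℝ} (hX : IsUpperSet X)
    (v z c : Fin m → ℝ) :
    kappaThreshNet v z c X = thresholdStopValue (fun i => min (v i) (z i)) X
      + ∑ j with Reaches (fun i => min (v i) (z i)) X j, boxSurplus X (z j) (c j) (v j) := by
  rw [kappaThreshNet_eq_sum, thresholdStopValue_eq_sum, ← Finset.sum_add_distrib]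
  refine Finset.sum_congr rfl fun j _ => ?_
  rw [indicator_min_eq_add_indicator_max_sub hX, add_sub_assoc, boxSurplus, Set.indicator_sub]

end Pathwise

section Probability

variable {Ω ι β : Type*} [MeasurableSpace Ω] [MeasurableSpace β] {μ : Measure Ω}

lemma setIntegral_preimage_eq_mul_of_indepFun {f : Ω → β} {g : Ω → ℝ} {s : Set β}
    (hfg : IndepFun f g μ) (hf : AEMeasurable f μ) (hg : AEMeasurable g μ)
    (hs : MeasurableSet s) :
    ∫ ω in f ⁻¹' s, g ω ∂μ = μ.real (f ⁻¹' s) * ∫ ω, g ω ∂μ := by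
  have hfs : NullMeasurableSet (f ⁻¹' s) μ := hf.nullMeasurableSet_preimage hs
  calc ∫ ω in f ⁻¹' s, g ω ∂μ
      = ∫ ω, s.indicator 1 (f ω) * id (g ω) ∂μ := by
        rw [← integral_indicator₀ hfs]
        exact integral_congr_ae (.of_forall fun ω => by by_cases h : f ω ∈ s <;> simp [h])
    _ = (∫ ω, s.indicator 1 (f ω) ∂μ) * ∫ ω, g ω ∂μ :=
        hfg.integral_fun_comp_mul_comp hf hg
          (measurable_one.indicator hs).aestronglyMeasurable aestronglyMeasurable_id
    _ = μ.real (f ⁻¹' s) * ∫ ω, g ω ∂μ := by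
        congr 1
        change ∫ ω, (f ⁻¹' s).indicator 1 ω ∂μ = _
        rw [integral_indicator₀ hfs]
        simp

variable [Preorder ι] [LocallyFiniteOrderBot ι] {x : ι → Ω → β} {X : Set β}

lemma nullMeasurableSet_reaches {j : ι} (hx : ∀ i, AEMeasurable (x i) μ) (hX : MeasurableSet X) :
    NullMeasurableSet {ω | Reaches (fun i => x i ω) X j} μ := by
  have hinter : {ω | Reaches (fun i => x i ω) X j} = ⋂ i ∈ Finset.Iio j, (x i ⁻¹' X)ᶜ := by
    ext ω
    simp [Reaches]
  rw [hinter]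
  exact (Finset.Iio j).finite_toSet.nullMeasurableSet_biInter fun i _ =>
    ((hx i).nullMeasurableSet_preimage hX).compl

open Classical in
lemma integrable_sum_reaches {s : Finset ι} {g : ι → Ω → ℝ} (hx : ∀ i, AEMeasurable (x i) μ)
    (hX : MeasurableSet X) (hg : ∀ j ∈ s, Integrable (g j) μ) :
    Integrable (fun ω => ∑ j ∈ s with Reaches (fun i => x i ω) X j, g j ω) μ := by
  rw [sum_filter_reaches_eq_sum_indicator]
  exact integrable_finsetSum s fun j hj =>
    (hg j hj).indicator₀ (nullMeasurableSet_reaches hx hX)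

lemma setIntegral_reaches_eq_mul {g : ι → Ω → ℝ}
    (hindep : iIndepFun (fun i ω => (x i ω, g i ω)) μ) (hx : ∀ i, AEMeasurable (x i) μ)
    (hg : ∀ i, AEMeasurable (g i) μ) (hX : MeasurableSet X) (j : ι) :
    ∫ ω in {ω | Reaches (fun i => x i ω) X j}, g j ω ∂μ
      = μ.real {ω | Reaches (fun i => x i ω) X j} * ∫ ω, g j ω ∂μ := by
  let past : Ω → Finset.Iio j → β := fun ω i => x i ω
  let missed : Set (Finset.Iio j → β) := ⋂ i, {y | y i ∉ X}
  have hpast : AEMeasurable past μ := aemeasurable_pi_lambda _ fun i => hx i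
  have hmissed : MeasurableSet missed :=
    .iInter fun i => (measurable_pi_apply i hX).compl
  have hpast_indep : IndepFun past (g j) μ :=
    (hindep.indepFun_finset₀ (Finset.Iio j) {j} (by simp) fun i => (hx i).prodMk (hg i)).comp
      (φ := fun (y : Finset.Iio j → β × ℝ) i => (y i).1)
      (ψ := fun (y : ({j} : Finset ι) → β × ℝ) => (y ⟨j, Finset.mem_singleton_self j⟩).2)
      (by fun_prop) (by fun_prop)
  have hreaches : {ω | Reaches (fun i => x i ω) X j} = past ⁻¹' missed := by
    ext ω
    simp [Reaches, past, missed]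
  rw [hreaches]
  exact setIntegral_preimage_eq_mul_of_indepFun hpast_indep hpast (hg j) hmissed

open Classical in
lemma integral_sum_reaches_eq_zero {s : Finset ι} {g : ι → Ω → ℝ}
    (hindep : iIndepFun (fun i ω => (x i ω, g i ω)) μ) (hx : ∀ i, AEMeasurable (x i) μ)
    (hg : ∀ i, Integrable (g i) μ) (hX : MeasurableSet X) (hzero : ∀ j ∈ s, ∫ ω, g j ω ∂μ = 0) :
    ∫ ω, ∑ j ∈ s with Reaches (fun i => x i ω) X j, g j ω ∂μ = 0 := by
  have hreaches (j : ι) := nullMeasurableSet_reaches (j := j) hx hX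
  rw [sum_filter_reaches_eq_sum_indicator,
    integral_finsetSum s fun j _ => (hg j).indicator₀ (hreaches j)]
  refine Finset.sum_eq_zero fun j hj => ?_
  rw [integral_indicator₀ (hreaches j),
    setIntegral_reaches_eq_mul hindep hx (fun i => (hg i).aemeasurable) hX, hzero j hj, mul_zero]

end Probability

section BoxProblem

variable {Ω : Type*} [MeasurableSpace Ω] {μ : Measure Ω}

lemma integrable_thresholdStopValue {m : ℕ} {x : Fin m → Ω → ℝ} {X : Set ℝ}
    (hx : ∀ i, Integrable (x i) μ) (hX : MeasurableSet X) :
    Integrable (fun ω => thresholdStopValue (fun i => x i ω) X) μ := by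
  classical
  have hxX (i : Fin m) : Integrable (fun ω => X.indicator id (x i ω)) μ :=
    (hx i).indicator₀ ((hx i).aemeasurable.nullMeasurableSet_preimage hX)
  simp only [thresholdStopValue_eq_sum]
  exact integrable_sum_reaches (fun i => (hx i).aemeasurable) hX fun i _ => hxX i

@[fun_prop]
lemma measurable_boxSurplus (X : Set ℝ) (z c : ℝ) : Measurable (boxSurplus X z c) := by
  by_cases hz : z ∈ X
  · rw [boxSurplus_of_mem hz]
    fun_prop
  · rw [boxSurplus_of_notMem hz]
    fun_prop

lemma integrable_boxSurplus [IsFiniteMeasure μ] {v : Ω → ℝ} (hv : Integrable v μ) (X : Set ℝ)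
    (z c : ℝ) : Integrable (fun ω => boxSurplus X z c (v ω)) μ := by
  by_cases hz : z ∈ X
  · rw [boxSurplus_of_mem hz]
    exact (hv.sub (integrable_const z)).pos_part.sub (integrable_const c)
  · rw [boxSurplus_of_notMem hz]
    exact integrable_zero Ω ℝ μ

lemma integral_boxSurplus [IsProbabilityMeasure μ] {v : Ω → ℝ} {z c : ℝ} (hv : Integrable v μ)
    (hstrike : ∫ ω, max (v ω - z) 0 ∂μ = c) (X : Set ℝ) :
    ∫ ω, boxSurplus X z c (v ω) ∂μ = 0 := by
  by_cases hz : z ∈ X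
  · have hpos : Integrable (fun ω => max (v ω - z) 0) μ := (hv.sub (integrable_const z)).pos_part
    rw [boxSurplus_of_mem hz, integral_sub hpos (integrable_const c), hstrike]
    simp
  · simp [boxSurplus_of_notMem hz]

theorem kappa_thresholding_value_general {m : ℕ} {v : Fin m → Ω → ℝ}
    (hint : ∀ i, Integrable (v i) μ) (hindep : iIndepFun v μ) {z c : Fin m → ℝ}
    (hstrike : ∀ i, ∫ ω, max (v i ω - z i) 0 ∂μ = c i) {X : Set ℝ} (hX : IsUpperSet X) :
    ∫ ω, kappaThreshNet (fun i => v i ω) z c X ∂μ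
      = ∫ ω, thresholdStopValue (fun i => min (v i ω) (z i)) X ∂μ := by
  classical
  have := hindep.isProbabilityMeasure
  have hXm : MeasurableSet X := hX.ordConnected.measurableSet
  have hκ (i : Fin m) : Integrable (fun ω => min (v i ω) (z i)) μ :=
    (hint i).inf (integrable_const (z i))
  have hκm (i : Fin m) : AEMeasurable (fun ω => min (v i ω) (z i)) μ := (hκ i).aemeasurable
  have hsurplus (i : Fin m) := integrable_boxSurplus (hint i) X (z i) (c i)
  have hpair : iIndepFun
      (fun i ω => (min (v i ω) (z i), boxSurplus X (z i) (c i) (v i ω))) μ :=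
    hindep.comp (fun i t => (min t (z i), boxSurplus X (z i) (c i) t)) fun i => by fun_prop
  simp only [kappaThreshNet_eq_thresholdStopValue_add hX]
  rw [integral_add (integrable_thresholdStopValue hκ hXm)
      (integrable_sum_reaches hκm hXm fun i _ => hsurplus i),
    integral_sum_reaches_eq_zero hpair hκm hsurplus hXm
      fun i _ => integral_boxSurplus (hint i) (hstrike i) X, add_zero]

end BoxProblem

/-- In the box problem with boxes considered in the fixed order
`1,…,m` (independent nonnegative prizes `v i`, opening costs `c i ≥ 0`, strike prices
`z i` with `E[(v i − z i)^+] = c i`, covered call values `κ i = min (v i) (z i)`), for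
any half-infinite target interval `X = (θ,∞)` or `X = [θ,∞)`, the expected net value
of the `κ`-thresholding policy with target interval `X` equals `E[κ_τ · 1{τ ≤ m}]`,
where `τ = min{i : κ i ∈ X}` (the expectation being `0` on the event that no such
index exists). -/
theorem kappa_thresholding_value {Ω : Type*} [MeasurableSpace Ω]
    (μ : Measure Ω) [IsProbabilityMeasure μ]
    (m : ℕ) (v : Fin m → Ω → ℝ)
    (hmeas : ∀ i, Measurable (v i))
    (hnonneg : ∀ i ω, 0 ≤ v i ω)
    (hint : ∀ i, Integrable (v i) μ)
    (hindep : iIndepFun v μ)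
    (z c : Fin m → ℝ) (hc_nonneg : ∀ i, 0 ≤ c i)
    (hstrike : ∀ i, ∫ ω, max (v i ω - z i) 0 ∂μ = c i)
    (X : Set ℝ) (hX : (∃ θ, X = Set.Ioi θ) ∨ (∃ θ, X = Set.Ici θ)) :
    ∫ ω, kappaThreshNet (fun i => v i ω) z c X ∂μ
      = ∫ ω, thresholdStopValue (fun i => min (v i ω) (z i)) X ∂μ := by
  have hup : IsUpperSet X := by
    rcases hX with ⟨θ, rfl⟩ | ⟨θ, rfl⟩
    exacts [isUpperSet_Ioi θ, isUpperSet_Ici θ]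
  exact kappa_thresholding_value_general hint hindep hstrike hup
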